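/- Let n be a positive integer, let S₁ and S₂ be n×n complex matrices, and let w : ℝ → ℂⁿ be a differentiable function satisfying w′(t) = S₁·w(t) + i·S₂·w(t) for all t ∈ ℝ. Define φ : ℝ × ℝ → ℂⁿ by φ(t,ξ) := exp(−ξ)·w(t). Then for all (t,ξ) ∈ ℝ × ℝ, the partial derivative in t satisfies ∂_t φ(t,ξ) = −∂_ξ(S₁·φ(t,ξ)) + i·S₂·φ(t,ξ), where ∂_ξ(S₁·φ(t,ξ)) denotes the partial derivative in ξ of the function ξ ↦ S₁·φ(t,ξ). -/

import Mathlib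

/-- Schrödingerisation warping identity: if `w′(t) = S₁ w(t) + i S₂ w(t)`, then
`φ(t,ξ) := e^{−ξ} w(t)` satisfies `∂ₜφ = −∂_ξ(S₁ φ) + i S₂ φ`. -/
theorem schrodingerisation_warping (n : ℕ) (hn : 0 < n)
    (S₁ S₂ : Matrix (Fin n) (Fin n) ℂ) (w : ℝ → Fin n → ℂ)
    (hw : ∀ t, HasDerivAt w (S₁.mulVec (w t) + Complex.I • S₂.mulVec (w t)) t) :
    ∀ t ξ : ℝ,
      HasDerivAt (fun t' : ℝ => ((Real.exp (-ξ) : ℝ) : ℂ) • w t')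
        (-(deriv (fun ξ' : ℝ => S₁.mulVec (((Real.exp (-ξ') : ℝ) : ℂ) • w t)) ξ)
          + Complex.I • S₂.mulVec (((Real.exp (-ξ) : ℝ) : ℂ) • w t)) t := by
  intro t ξ
  have h1 : HasDerivAt (fun ξ' : ℝ => ((Real.exp (-ξ') : ℝ) : ℂ))
      ((-Real.exp (-ξ) : ℝ) : ℂ) ξ := by
    have h := ((hasDerivAt_neg ξ).exp).ofReal_comp
    simpa using h
  have h2 : HasDerivAt (fun ξ' : ℝ => S₁.mulVec (((Real.exp (-ξ') : ℝ) : ℂ) • w t))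
      (((-Real.exp (-ξ) : ℝ) : ℂ) • S₁.mulVec (w t)) ξ := by
    simp only [Matrix.mulVec_smul]
    exact h1.smul_const (S₁.mulVec (w t))
  rw [h2.deriv]
  have h3 := (hw t).const_smul ((Real.exp (-ξ) : ℝ) : ℂ)
  refine h3.congr_deriv ?_
  rw [Matrix.mulVec_smul, smul_add, smul_comm Complex.I, Complex.ofReal_neg, neg_smul, neg_neg]
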